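/- Let φ : ℝ → ℝ be convex with φ(0) = 0. Then inf_{λ ∈ [0,1]} φ(λ) ≤ sup_{f ∈ AC₀} J(f); that is, there exist functions f ∈ AC₀ (in fact linear ones f(t) = ct) for which min_{t ∈ [0,1]} f(t) − ∫_0^1 Λ*(f′(u)) du comes arbitrarily close to (indeed attains) inf_{λ ∈ [0,1]} φ(λ). -/

import Mathlib

open MeasureTheory

/-- The Legendre transform `Λ*(x) = sup_{λ ∈ ℝ} (λ x - φ(λ))`, with values in `[0, +∞]`
(note that the supremum is nonnegative since `φ 0 = 0`). -/
noncomputable def legendreTransform (φ : ℝ → ℝ) (x : ℝ) : ENNReal :=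
  ⨆ l : ℝ, ENNReal.ofReal (l * x - φ l)

/-- For `f ∈ AC₀` represented by an integrable `g` on `[0,1]` via `f t = ∫_0^t g`,
this is `I(f) = ∫_0^1 Λ*(g(u)) du ∈ [0, +∞]`. -/
noncomputable def rateACZero (φ : ℝ → ℝ) (g : ℝ → ℝ) : ENNReal :=
  ∫⁻ u in Set.Icc (0:ℝ) 1, legendreTransform φ (g u)

/-- `J(f) = min_{t ∈ [0,1]} f(t) - I(f) ∈ [-∞, +∞)`, with `J(f) = -∞` when `I(f) = +∞`,
for `f ∈ AC₀` given by `f t = ∫_0^t g`. -/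
noncomputable def JACZero (φ : ℝ → ℝ) (g : ℝ → ℝ) : EReal :=
  ((sInf ((fun t => ∫ u in (0:ℝ)..t, g u) '' Set.Icc (0:ℝ) 1) : ℝ) : EReal) -
    (rateACZero φ g : EReal)

theorem aux_subgrad (ψ : ℝ → ℝ) (hc : ConvexOn ℝ Set.univ ψ) (h0 : ψ 0 = 0)
    (hn : ∀ l ∈ Set.Icc (0:ℝ) 1, 0 ≤ ψ l) : ∃ c : ℝ, 0 ≤ c ∧ ∀ l, c * l ≤ ψ l := by
  have key : ∀ a b : ℝ, a < 0 → 0 < b → ψ a / a ≤ ψ b / b := by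
    intro a b ha hb
    have := hc.slope_mono_adjacent (Set.mem_univ a) (Set.mem_univ b) ha hb
    simp only [h0, zero_sub, sub_zero] at this
    rwa [neg_div_neg_eq] at this
  have hpos : ∀ l : ℝ, 0 < l → 0 ≤ ψ l := by
    intro l hl
    by_cases h1 : l ≤ 1
    · exact hn l ⟨hl.le, h1⟩
    · push Not at h1
      have h2 := hc.slope_mono_adjacent (Set.mem_univ 0) (Set.mem_univ l) one_pos h1
      have h3 := hn 1 ⟨zero_le_one, le_rfl⟩
      rw [h0, le_div_iff₀ (by linarith)] at h2
      simp only [sub_zero, div_one] at h2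
      nlinarith
  let S : Set ℝ := (fun l => ψ l / l) '' Set.Ioi 0
  have hS : S.Nonempty := ⟨_, 1, Set.mem_Ioi.2 one_pos, rfl⟩
  have hb : BddBelow S := by
    refine ⟨0, ?_⟩
    rintro _ ⟨l, hl, rfl⟩
    exact div_nonneg (hpos l hl) (le_of_lt hl)
  refine ⟨sInf S, ?_, ?_⟩
  · apply le_csInf hS
    rintro _ ⟨l, hl, rfl⟩
    exact div_nonneg (hpos l hl) (le_of_lt hl)
  · intro l
    rcases lt_trichotomy l 0 with h | h | h
    · have : ψ l / l ≤ sInf S := by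
        apply le_csInf hS
        rintro _ ⟨b, hb, rfl⟩
        exact key l b h hb
      rwa [div_le_iff_of_neg h] at this
    · simp [h, h0]
    · have : sInf S ≤ ψ l / l := csInf_le hb ⟨l, h, rfl⟩
      rwa [le_div_iff₀ h] at this

/-- For `φ : ℝ → ℝ` convex with `φ(0) = 0`,
`sup_{f ∈ AC₀} J(f) = inf_{λ ∈ [0,1]} φ(λ)`. -/
theorem inf_phi_le_sup_J (φ : ℝ → ℝ)
    (hconv : ConvexOn ℝ Set.univ φ) (h0 : φ 0 = 0) :
    ((⨅ l : Set.Icc (0:ℝ) 1, φ l : ℝ) : EReal) ≤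
      ⨆ (g : ℝ → ℝ) (_ : IntegrableOn g (Set.Icc (0:ℝ) 1)), JACZero φ g := by
  have hcont : ContinuousOn φ (Set.Icc 0 1) :=
    (hconv.continuousOn isOpen_univ).mono (Set.subset_univ _)
  obtain ⟨a, ha, hmin⟩ := isCompact_Icc.exists_isMinOn (Set.nonempty_Icc.2 zero_le_one) hcont
  have hmin' : ∀ l ∈ Set.Icc (0:ℝ) 1, φ a ≤ φ l := fun l hl => hmin hl
  obtain ⟨c, hc1, hc2⟩ : ∃ c : ℝ, (∀ t ∈ Set.Icc (0:ℝ) 1, c * a ≤ t * c) ∧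
      ∀ l, l * c - φ l ≤ c * a - φ a := by
    rcases eq_or_lt_of_le ha.1 with h | h
    · subst h
      obtain ⟨c, hc, hl⟩ := aux_subgrad φ hconv h0 (fun l hl => h0 ▸ hmin' l hl)
      refine ⟨c, fun t ht => ?_, fun l => ?_⟩
      · have := mul_nonneg ht.1 hc
        linarith
      · have := hl l
        rw [h0]; linarith
    rcases eq_or_lt_of_le ha.2 with h' | h'
    · subst h'
      have hψ : ConvexOn ℝ Set.univ (fun l => φ (1 - l) - φ 1) := by
        refine ⟨convex_univ, fun x _ y _ p q hp hq hpq => ?_⟩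
        have := hconv.2 (Set.mem_univ (1 - x)) (Set.mem_univ (1 - y)) hp hq hpq
        simp only [smul_eq_mul] at this ⊢
        have e : 1 - (p * x + q * y) = p * (1 - x) + q * (1 - y) := by linear_combination -hpq
        rw [e]
        have e2 : φ 1 = p * φ 1 + q * φ 1 := by linear_combination -(φ 1) * hpq
        linarith
      obtain ⟨c, hc, hl⟩ := aux_subgrad _ hψ (by simp) (fun l hl => by
        have := hmin' (1 - l) ⟨by linarith [hl.2], by linarith [hl.1]⟩
        linarith)
      refine ⟨-c, fun t ht => ?_, fun l => ?_⟩
      · nlinarith [ht.2]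
      · have := hl (1 - l)
        simp only [sub_sub_cancel] at this
        linarith
    · have hloc : IsLocalMin φ a := hmin.isLocalMin (Icc_mem_nhds h h')
      have := IsMinOn.of_isLocalMin_of_convex_univ hloc hconv
      refine ⟨0, by simp, fun l => ?_⟩
      have := this l
      linarith
  have hinf : (⨅ l : Set.Icc (0:ℝ) 1, φ l) ≤ φ a := by
    refine ciInf_le ⟨φ a, ?_⟩ (⟨a, ha⟩ : Set.Icc (0:ℝ) 1)
    rintro _ ⟨l, rfl⟩
    exact hmin' l l.2
  have hnn : 0 ≤ c * a - φ a := by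
    have := hc2 0
    rw [h0] at this
    linarith
  refine le_trans (EReal.coe_le_coe_iff.2 hinf) ?_
  refine le_iSup₂_of_le (fun _ => c) (by simp) ?_
  have hr : rateACZero φ (fun _ => c) ≤ ENNReal.ofReal (c * a - φ a) := by
    simp only [rateACZero, lintegral_const, Measure.restrict_apply MeasurableSet.univ,
      Set.univ_inter, Real.volume_Icc, sub_zero, ENNReal.ofReal_one, mul_one]
    exact iSup_le fun l => ENNReal.ofReal_le_ofReal (hc2 l)
  have hr' : (rateACZero φ (fun _ => c) : EReal) ≤ ((c * a - φ a : ℝ) : EReal) := by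
    have := EReal.coe_ennreal_le_coe_ennreal_iff.2 hr
    rwa [EReal.coe_ennreal_ofReal, max_eq_left hnn] at this
  have hs : c * a ≤ sInf ((fun t => ∫ _ in (0:ℝ)..t, c) '' Set.Icc (0:ℝ) 1) := by
    apply le_csInf ((Set.nonempty_Icc.2 zero_le_one).image _)
    rintro _ ⟨t, ht, rfl⟩
    simpa using hc1 t ht
  have := EReal.sub_le_sub (EReal.coe_le_coe_iff.2 hs) hr'
  rw [← EReal.coe_sub, sub_sub_cancel] at this
  exact this
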